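/- Let M and M' be two equivalent erase-ordered linear tree-to-word transducers such that (a) every quasi-periodic state q satisfies lcp(L_q) = lcs(L_q) = ε, and (b) for each occurrence q(x) u in a rule (a state followed by the word u) for which the language L_q u = { w u : w ∈ L_q } is quasi-periodic, lcp(L_q u) = ε. Let q, q' be two co-reachable states of M, M' respectively, with rules q, f → u₀ q₁(x_{σ₁(1)}) … q_n(x_{σ₁(n)}) u_n and q', f → v₀ q'₁(x_{σ₂(1)}) … q'_n(x_{σ₂(n)}) v_n. Then for all k < l such that σ₁(k) = σ₂(l), all the states q_i with k ≤ i ≤ l are periodic with one common period, and u_j = ε for all k ≤ j < l. -/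

import Mathlib

namespace LTWpaper

/-- Trees over a ranked alphabet: a symbol of arity `n` with `n` children. -/
inductive RTree (F : Type) (ar : F → ℕ) : Type
  | node (f : F) (ts : Fin (ar f) → RTree F ar) : RTree F ar

/-- A rule right-hand side `u₀ q₁(x_{σ(1)}) u₁ … q_n(x_{σ(n)}) u_n`:
`word i` is `u_i` (for `i : Fin (n+1)`), `st i` is `q_{i+1}` (for `i : Fin n`),
and position `i` reads the subtree `x_{perm i}`. -/
structure LTWRule (Δ Q : Type) (n : ℕ) where
  word : Fin (n + 1) → List Δ
  st : Fin n → Q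
  perm : Equiv.Perm (Fin n)

/-- A (deterministic) linear tree-to-word transducer with axiom `pre init(x) post`. -/
structure LTW (F : Type) (ar : F → ℕ) (Δ Q : Type) where
  pre : List Δ
  init : Q
  post : List Δ
  rules : Q → (f : F) → Option (LTWRule Δ Q (ar f))

/-- `u 0 ++ ws 0 ++ u 1 ++ ws 1 ++ ⋯ ++ ws (n-1) ++ u n`. -/
def interleave {Δ : Type} (n : ℕ) (u : Fin (n + 1) → List Δ) (ws : Fin n → List Δ) :
    List Δ :=
  u 0 ++ (List.finRange n).foldr (fun i acc => ws i ++ u i.succ ++ acc) []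

/-- The partial function `⟦M⟧_q` computed by state `q`. -/
def LTW.semState {F Δ Q : Type} {ar : F → ℕ} (M : LTW F ar Δ Q) :
    RTree F ar → Q → Option (List Δ)
  | .node f ts, q =>
    match M.rules q f with
    | none => none
    | some r =>
      if h : ∀ i : Fin (ar f), (M.semState (ts (r.perm i)) (r.st i)).isSome then
        some (interleave (ar f) r.word fun i => (M.semState (ts (r.perm i)) (r.st i)).get (h i))
      else none

/-- The partial function `⟦M⟧` computed by the transducer. -/
def LTW.sem {F Δ Q : Type} {ar : F → ℕ} (M : LTW F ar Δ Q) (t : RTree F ar) :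
    Option (List Δ) :=
  (M.semState t M.init).map fun w => M.pre ++ w ++ M.post

/-- The output language `L_q` of a state. -/
def LTW.lang {F Δ Q : Type} {ar : F → ℕ} (M : LTW F ar Δ Q) (q : Q) : Set (List Δ) :=
  {w | ∃ t, M.semState t q = some w}

/-- Standing assumption: every state has nonempty domain. -/
def LTW.NonemptyDoms {F Δ Q : Type} {ar : F → ℕ} (M : LTW F ar Δ Q) : Prop :=
  ∀ q : Q, ∃ t w, M.semState t q = some w

/-- `w^n`, the `n`-fold concatenation of the word `w`. -/
def listPow {Δ : Type} (w : List Δ) : ℕ → List Δ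
  | 0 => []
  | n + 1 => w ++ listPow w n

/-- `lcp L = ε`: the only common prefix of all words of `L` is the empty word. -/
def LcpEps {Δ : Type} (L : Set (List Δ)) : Prop :=
  ∀ w : List Δ, (∀ v ∈ L, w <+: v) → w = []

/-- `lcs L = ε`: the only common suffix of all words of `L` is the empty word. -/
def LcsEps {Δ : Type} (L : Set (List Δ)) : Prop :=
  ∀ w : List Δ, (∀ v ∈ L, w <:+ v) → w = []

/-- A language is earliest if `lcp L = lcs L = ε`. -/
def EarliestLang {Δ : Type} (L : Set (List Δ)) : Prop := LcpEps L ∧ LcsEps L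

/-- `L ⊆ w*`. -/
def SubPow {Δ : Type} (w : List Δ) (L : Set (List Δ)) : Prop :=
  ∀ v ∈ L, ∃ n : ℕ, v = listPow w n

/-- `L` is periodic of period `w`: `w` is a smallest word with `L ⊆ w*`. -/
def PeriodicOf {Δ : Type} (L : Set (List Δ)) (w : List Δ) : Prop :=
  SubPow w L ∧ ∀ w' : List Δ, SubPow w' L → w.length ≤ w'.length

/-- `L` is periodic. -/
def Periodic {Δ : Type} (L : Set (List Δ)) : Prop := ∃ w, PeriodicOf L w

/-- `L` is quasi-periodic on the left of handle `u` and period `w`: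
`w` is a smallest word with `L ⊆ u w*`. -/
def QPLeftOf {Δ : Type} (L : Set (List Δ)) (u w : List Δ) : Prop :=
  (∀ v ∈ L, ∃ n : ℕ, v = u ++ listPow w n) ∧
  ∀ w' : List Δ, (∀ v ∈ L, ∃ n : ℕ, v = u ++ listPow w' n) → w.length ≤ w'.length

/-- `L` is quasi-periodic on the right of handle `u` and period `w`:
`w` is a smallest word with `L ⊆ w* u`. -/
def QPRightOf {Δ : Type} (L : Set (List Δ)) (u w : List Δ) : Prop :=
  (∀ v ∈ L, ∃ n : ℕ, v = listPow w n ++ u) ∧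
  ∀ w' : List Δ, (∀ v ∈ L, ∃ n : ℕ, v = listPow w' n ++ u) → w.length ≤ w'.length

/-- `L` is quasi-periodic (on the left or on the right). -/
def QuasiPeriodic {Δ : Type} (L : Set (List Δ)) : Prop :=
  (∃ u w, QPLeftOf L u w) ∨ (∃ u w, QPRightOf L u w)

/-- The language `L u = { v u : v ∈ L }`. -/
def appendLang {Δ : Type} (L : Set (List Δ)) (u : List Δ) : Set (List Δ) :=
  {v | ∃ x ∈ L, v = x ++ u}

/-- The language `L₁ u L₂ = { a u b : a ∈ L₁, b ∈ L₂ }`. -/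
def pairLang {Δ : Type} (L₁ : Set (List Δ)) (u : List Δ) (L₂ : Set (List Δ)) :
    Set (List Δ) :=
  {v | ∃ a ∈ L₁, ∃ b ∈ L₂, v = a ++ u ++ b}

/-- An LTW is earliest: every state `q` satisfies `lcp L_q = lcs L_q = ε`, and in every rule
every part `qᵢ(x) uᵢ` satisfies `lcp (L_{qᵢ} uᵢ) = ε`. -/
def LTW.Earliest {F Δ Q : Type} {ar : F → ℕ} (M : LTW F ar Δ Q) : Prop :=
  (∀ q : Q, EarliestLang (M.lang q)) ∧
  ∀ (q : Q) (f : F) (r : LTWRule Δ Q (ar f)), M.rules q f = some r →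
    ∀ i : Fin (ar f), LcpEps (appendLang (M.lang (r.st i)) (r.word i.succ))

/-- An erasing state: `L_q = {ε}`. -/
def LTW.Erasing {F Δ Q : Type} {ar : F → ℕ} (M : LTW F ar Δ Q) (q : Q) : Prop :=
  M.lang q = {([] : List Δ)}

/-- Erase-ordered: in every rule, if `qᵢ` is erasing then every later `q_j` is erasing,
`σ(i) ≤ σ(j)` and `u_j = ε`. -/
def LTW.EraseOrdered {F Δ Q : Type} {ar : F → ℕ} (M : LTW F ar Δ Q) : Prop :=
  ∀ (q : Q) (f : F) (r : LTWRule Δ Q (ar f)), M.rules q f = some r →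
    ∀ i j : Fin (ar f), M.Erasing (r.st i) → i ≤ j →
      M.Erasing (r.st j) ∧ r.perm i ≤ r.perm j ∧ r.word j.succ = []

/-- Co-reachable pairs of states of two transducers over the same input alphabet. -/
inductive CoReach {F Δ Q₁ Q₂ : Type} {ar : F → ℕ}
    (M₁ : LTW F ar Δ Q₁) (M₂ : LTW F ar Δ Q₂) : Q₁ → Q₂ → Prop
  | base : CoReach M₁ M₂ M₁.init M₂.init
  | step {q₁ : Q₁} {q₂ : Q₂} {f : F} {r₁ : LTWRule Δ Q₁ (ar f)} {r₂ : LTWRule Δ Q₂ (ar f)}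
      {i j : Fin (ar f)} :
      CoReach M₁ M₂ q₁ q₂ → M₁.rules q₁ f = some r₁ → M₂.rules q₂ f = some r₂ →
      r₁.perm i = r₂.perm j → CoReach M₁ M₂ (r₁.st i) (r₂.st j)

/-- Two LTWs are same-ordered: co-reachable states either both lack a rule for `f`,
or have rules for `f` with the same permutation. -/
def SameOrdered {F Δ Q₁ Q₂ : Type} {ar : F → ℕ}
    (M₁ : LTW F ar Δ Q₁) (M₂ : LTW F ar Δ Q₂) : Prop :=
  ∀ q₁ q₂, CoReach M₁ M₂ q₁ q₂ → ∀ f : F,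
    (M₁.rules q₁ f = none ∧ M₂.rules q₂ f = none) ∨
    ∃ (r₁ : LTWRule Δ Q₁ (ar f)) (r₂ : LTWRule Δ Q₂ (ar f)),
      M₁.rules q₁ f = some r₁ ∧ M₂.rules q₂ f = some r₂ ∧ r₁.perm = r₂.perm

/-- `Accessible q p`: state `p` is accessible from state `q`. -/
inductive LTW.Accessible {F Δ Q : Type} {ar : F → ℕ} (M : LTW F ar Δ Q) : Q → Q → Prop
  | refl (q : Q) : M.Accessible q q
  | step {q p : Q} {f : F} {r : LTWRule Δ Q (ar f)} (i : Fin (ar f)) :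
      M.Accessible q p → M.rules p f = some r → M.Accessible q (r.st i)

/-- Partial normal form. -/
def LTW.PartialNormalForm {F Δ Q : Type} {ar : F → ℕ} (M : LTW F ar Δ Q) : Prop :=
  (∀ q : Q, QuasiPeriodic (M.lang q) → EarliestLang (M.lang q)) ∧
  M.EraseOrdered ∧
  ∀ (q : Q) (f : F) (r : LTWRule Δ Q (ar f)), M.rules q f = some r →
    ∀ (i : ℕ) (hi : i + 1 < ar f),
      QuasiPeriodic (pairLang (M.lang (r.st ⟨i, Nat.lt_of_succ_lt hi⟩))
          (r.word (Fin.succ ⟨i, Nat.lt_of_succ_lt hi⟩)) (M.lang (r.st ⟨i + 1, hi⟩))) →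
      EarliestLang (pairLang (M.lang (r.st ⟨i, Nat.lt_of_succ_lt hi⟩))
          (r.word (Fin.succ ⟨i, Nat.lt_of_succ_lt hi⟩)) (M.lang (r.st ⟨i + 1, hi⟩))) ∧
      r.perm ⟨i, Nat.lt_of_succ_lt hi⟩ < r.perm ⟨i + 1, hi⟩

/-!
If `σ k = σ' l` with `k < l`, then, by counting, some position `m ≥ l` of the first rule reads a
subtree that the second rule reads at a position before `l`. Equivalence thus yields equal words
in which an output of `q_k` and a later output of `q_m` occur in the opposite order on the other
side. Two such crossing factors cannot diverge, so an output of `q_m` is a suffix of every longer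
one, say `y₂ = z y₁`; inserting `z` over and over shows that `x B z^ω` is one and the same
infinite word `ξ` for all outputs `x` of `q_k` and all words `B` that can occur between the two.
Removing the factors of `x B` one by one, the earliest conditions make every `q_i` output only
periods of `ξ` and every constant word in between empty, and the periods of an infinite word are
the powers of one word.
-/

section Words

open Stream'

variable {Δ : Type} {L X : Set (List Δ)} {ξ η θ : Stream' Δ}

/-- The periods of the infinite word `ξ`, that is the finite words `w` with `w ξ = ξ`. Languages of
periods of one common infinite word play the role of periodic languages of one common period. -/
def periods (ξ : Stream' Δ) : Set (List Δ) := {w | w ++ₛ ξ = ξ}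

theorem mem_periods {w : List Δ} : w ∈ periods ξ ↔ w ++ₛ ξ = ξ := Iff.rfl

theorem nil_mem_periods : [] ∈ periods ξ := nil_append_stream ξ

theorem append_mem_periods_iff {v w : List Δ} (hv : v ∈ periods ξ) :
    v ++ w ∈ periods ξ ↔ w ∈ periods ξ := by
  rw [mem_periods, mem_periods, append_append_stream, ← append_right_inj v (w ++ₛ ξ),
    mem_periods.1 hv]

theorem listPow_mem_periods {w : List Δ} (hw : w ∈ periods ξ) : ∀ n, listPow w n ∈ periods ξ
  | 0 => nil_mem_periods
  | n + 1 => (append_mem_periods_iff hw).2 (listPow_mem_periods hw n)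

theorem mem_periods_cycle {w : List Δ} (hw : w ≠ []) : w ∈ periods (cycle w hw) :=
  (cycle_eq w hw).symm

theorem eq_of_common_mem_periods {w : List Δ} (hw : w ≠ []) (hξ : w ∈ periods ξ)
    (hη : w ∈ periods η) : ξ = η := by
  rw [mem_periods] at hξ hη
  have hpos := List.length_pos_iff.2 hw
  refine Stream'.ext fun n => ?_
  induction n using Nat.strong_induction_on with
  | _ n ih =>
    rw [← hξ, ← hη]
    obtain hn | hn := lt_or_ge n w.length
    · rw [get_append_left _ _ _ hn, get_append_left _ _ _ hn]
    · obtain ⟨m, rfl⟩ := Nat.exists_eq_add_of_le hn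
      rw [get_append_right, get_append_right]
      exact ih m (by omega)

theorem prefix_of_append_stream_eq {v w : List Δ} (h : v ++ₛ ξ = w ++ₛ η)
    (hvw : v.length ≤ w.length) : v <+: w := by
  have htake := congrArg (Stream'.take v.length) h
  rw [take_append_of_le_length _ _ _ le_rfl, take_append_of_le_length _ _ _ hvw,
    List.take_length] at htake
  exact htake ▸ List.take_prefix _ _

theorem exists_shortest (hL : L.Nonempty) : ∃ w ∈ L, ∀ v ∈ L, w.length ≤ v.length :=
  ⟨Function.argminOn List.length L hL, Function.argminOn_mem _ _ _,
    fun _ hv => Function.argminOn_le _ _ hv⟩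

theorem exists_mem_periods_iff_listPow (ξ : Stream' Δ) :
    ∃ c, ∀ w, w ∈ periods ξ ↔ ∃ n, w = listPow c n := by
  by_cases hne : {w | w ∈ periods ξ ∧ w ≠ []}.Nonempty
  · obtain ⟨c, ⟨hc, hc0⟩, hmin⟩ := exists_shortest hne
    refine ⟨c, fun w => ⟨fun hw => ?_, ?_⟩⟩
    · induction hlen : w.length using Nat.strong_induction_on generalizing w with
      | _ _ ih =>
        obtain rfl | hw0 := eq_or_ne w []
        · exact ⟨0, rfl⟩
        obtain ⟨v, rfl⟩ := prefix_of_append_stream_eq (hc.trans hw.symm) (hmin w ⟨hw, hw0⟩)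
        have hlt : v.length < (c ++ v).length := by
          simpa only [List.length_append, lt_add_iff_pos_left] using List.length_pos_iff.2 hc0
        obtain ⟨n, rfl⟩ := ih _ (hlen ▸ hlt) v ((append_mem_periods_iff hc).1 hw) rfl
        exact ⟨n + 1, rfl⟩
    · rintro ⟨n, rfl⟩
      exact listPow_mem_periods hc n
  · refine ⟨[], fun w => ⟨fun hw => ⟨0, ?_⟩, ?_⟩⟩
    · by_contra hw0
      exact hne ⟨w, hw, hw0⟩
    · rintro ⟨n, rfl⟩
      exact listPow_mem_periods nil_mem_periods n

theorem listPow_nil : ∀ n, listPow ([] : List Δ) n = []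
  | 0 => rfl
  | n + 1 => listPow_nil n

theorem listPow_append_self (w : List Δ) : ∀ n, listPow w n ++ w = w ++ listPow w n
  | 0 => (List.append_nil w).symm
  | n + 1 => by rw [listPow, List.append_assoc, listPow_append_self w n]

theorem mem_periods_of_listPow_mem {w : List Δ} {n : ℕ} (hw : listPow w n ∈ periods ξ)
    (hne : listPow w n ≠ []) : w ∈ periods ξ := by
  refine eq_of_common_mem_periods hne ?_ hw
  rw [mem_periods, ← append_append_stream, listPow_append_self, append_append_stream,
    mem_periods.1 hw]

theorem periodicOf_of_subset_periods {c v : List Δ}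
    (hc : ∀ w, w ∈ periods ξ ↔ ∃ n, w = listPow c n) (hL : L ⊆ periods ξ) (hv : v ∈ L)
    (hv0 : v ≠ []) : PeriodicOf L c := by
  refine ⟨fun w hw => (hc w).1 (hL hw), fun w hw => ?_⟩
  obtain ⟨n, rfl⟩ := hw v hv
  obtain ⟨m, rfl⟩ := (hc w).1 (mem_periods_of_listPow_mem (hL hv) hv0)
  cases m with
  | zero => exact absurd (listPow_nil n) hv0
  | succ m => exact (List.prefix_append c _).length_le

theorem periodicOf_singleton_nil : PeriodicOf {([] : List Δ)} [] :=
  ⟨fun _ hv => ⟨0, hv⟩, fun _ _ => Nat.zero_le _⟩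

theorem quasiPeriodic_of_left {u c : List Δ} (h : ∀ v ∈ L, ∃ n, v = u ++ listPow c n) :
    QuasiPeriodic L :=
  let ⟨w, hw, hmin⟩ :=
    exists_shortest (L := {c | ∀ v ∈ L, ∃ n, v = u ++ listPow c n}) ⟨c, h⟩
  Or.inl ⟨u, w, hw, hmin⟩

theorem quasiPeriodic_of_right {u c : List Δ} (h : ∀ v ∈ L, ∃ n, v = listPow c n ++ u) :
    QuasiPeriodic L :=
  let ⟨w, hw, hmin⟩ :=
    exists_shortest (L := {c | ∀ v ∈ L, ∃ n, v = listPow c n ++ u}) ⟨c, h⟩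
  Or.inr ⟨u, w, hw, hmin⟩

theorem eq_singleton_nil_of_subsingleton (hL : L.Nonempty) (hs : L.Subsingleton)
    (hlcp : QuasiPeriodic L → LcpEps L) : L = {[]} := by
  obtain ⟨w, rfl⟩ := (Set.exists_eq_singleton_iff_nonempty_subsingleton).2 ⟨hL, hs⟩
  have hqp : QuasiPeriodic {w} :=
    quasiPeriodic_of_left (u := w) (c := []) fun v hv => ⟨0, hv.trans (List.append_nil w).symm⟩
  rw [hlcp hqp w fun v hv => hv ▸ List.prefix_rfl]

theorem quasiPeriodic_of_append_stream_eq (h : ∀ x ∈ X, x ++ₛ η = θ) : QuasiPeriodic X := by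
  obtain rfl | hX := X.eq_empty_or_nonempty
  · exact quasiPeriodic_of_left (u := []) (c := []) fun v hv => hv.elim
  obtain ⟨c, hc⟩ := exists_mem_periods_iff_listPow η
  obtain ⟨x₀, hx₀, hmin⟩ := exists_shortest hX
  refine quasiPeriodic_of_left (u := x₀) (c := c) fun x hx => ?_
  have heq : x ++ₛ η = x₀ ++ₛ η := (h x hx).trans (h x₀ hx₀).symm
  obtain ⟨t, rfl⟩ := prefix_of_append_stream_eq heq.symm (hmin x hx)
  rw [append_append_stream, append_right_inj] at heq
  obtain ⟨n, rfl⟩ := (hc t).1 heq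
  exact ⟨n, rfl⟩

theorem eq_of_append_stream_eq (hX : X.Nonempty) (hlcp : QuasiPeriodic X → LcpEps X)
    (h : ∀ x ∈ X, x ++ₛ η = θ) : η = θ := by
  obtain ⟨x₀, hx₀, hmin⟩ := exists_shortest hX
  have hx₀_nil : x₀ = [] := hlcp (quasiPeriodic_of_append_stream_eq h) x₀ fun x hx =>
    prefix_of_append_stream_eq ((h x₀ hx₀).trans (h x hx).symm) (hmin x hx)
  rw [← h x₀ hx₀, hx₀_nil, nil_append_stream]

theorem subset_periods_of_append_stream_eq (hX : X.Nonempty) (hlcp : QuasiPeriodic X → LcpEps X)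
    (h : ∀ x ∈ X, x ++ₛ η = θ) : X ⊆ periods η := fun x hx =>
  (h x hx).trans (eq_of_append_stream_eq hX hlcp h).symm

theorem eq_nil_of_subset_periods {u : List Δ} (hX : X ⊆ periods ξ) (hu : u ++ₛ η = ξ)
    (hlcp : QuasiPeriodic (appendLang X u) → LcpEps (appendLang X u)) : u = [] := by
  have hη : ∀ v ∈ appendLang X u, v ++ₛ η = ξ := by
    rintro _ ⟨x, hx, rfl⟩
    rw [append_append_stream, hu]
    exact hX hx
  refine hlcp (quasiPeriodic_of_append_stream_eq hη) u fun v hv =>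
    prefix_of_append_stream_eq (hu.trans (hη v hv).symm) ?_
  obtain ⟨x, -, rfl⟩ := hv
  exact (List.suffix_append x u).length_le

theorem subset_periods_of_suffix (hX : X.Nonempty) (hlcs : QuasiPeriodic X → LcsEps X)
    (h : ∀ x ∈ X, ∀ y ∈ X, x.length ≤ y.length → ∃ z ∈ periods ξ, y = z ++ x) :
    X ⊆ periods ξ := by
  obtain ⟨c, hc⟩ := exists_mem_periods_iff_listPow ξ
  obtain ⟨x₀, hx₀, hmin⟩ := exists_shortest hX
  have hdec : ∀ x ∈ X, ∃ z ∈ periods ξ, x = z ++ x₀ := fun x hx => h x₀ hx₀ x hx (hmin x hx)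
  have hqp : QuasiPeriodic X := quasiPeriodic_of_right (u := x₀) (c := c) fun x hx =>
    let ⟨z, hz, hx⟩ := hdec x hx
    let ⟨n, hn⟩ := (hc z).1 hz
    ⟨n, hn ▸ hx⟩
  have hx₀_nil : x₀ = [] := hlcs hqp x₀ fun x hx =>
    let ⟨z, _, hx⟩ := hdec x hx
    ⟨z, hx.symm⟩
  intro x hx
  obtain ⟨z, hz, rfl⟩ := hdec x hx
  rwa [hx₀_nil, List.append_nil]

end Words

section Crossing

variable {Δ ι κ : Type}

theorem exists_diverging_of_not_prefix {v w : List Δ} (hvw : ¬v <+: w) (hwv : ¬w <+: v) :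
    ∃ p a b s t, a ≠ b ∧ v = p ++ a :: s ∧ w = p ++ b :: t := by
  induction v generalizing w with
  | nil => exact absurd List.nil_prefix hvw
  | cons a v ih =>
    cases w with
    | nil => exact absurd List.nil_prefix hwv
    | cons b w =>
      obtain rfl | hab := eq_or_ne a b
      · rw [List.prefix_cons_inj] at hvw hwv
        obtain ⟨p, c, d, s, t, hcd, rfl, rfl⟩ := ih hvw hwv
        exact ⟨a :: p, c, d, s, t, hcd, rfl, rfl⟩
      · exact ⟨[], a, b, v, w, hab, rfl, rfl⟩

theorem prefix_of_prefix_diverging {p v s t : List Δ} {a b : Δ} (hab : a ≠ b)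
    (ha : v <+: p ++ a :: s) (hb : v <+: p ++ b :: t) : v <+: p := by
  obtain hvp | ⟨c, rfl⟩ := List.prefix_or_prefix_of_prefix ha (List.prefix_append p _)
  · exact hvp
  cases c with
  | nil => rw [List.append_nil]
  | cons c _ =>
    rw [List.prefix_append_right_inj, List.cons_prefix_cons] at ha hb
    exact absurd (ha.1.symm.trans hb.1) hab

variable {i₁ i₂ : ι} {j₁ j₂ : κ}

/-- If `x i₁` and `x i₂` diverged, then the position where they do so would be the same in
`d i₁` and `d i₂` for all `j`, and the rest of `d i₁` would determine `b j`. -/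
theorem prefix_or_prefix_of_append_eq_append {x d : ι → List Δ} {b c : κ → List Δ}
    (h : ∀ i j, x i ++ b j = c j ++ d i) (hb : b j₁ ≠ b j₂) (i₁ i₂ : ι) :
    x i₁ <+: x i₂ ∨ x i₂ <+: x i₁ := by
  by_contra! hx
  obtain ⟨p, α, β, s, t, hαβ, h₁, h₂⟩ := exists_diverging_of_not_prefix hx.1 hx.2
  have hdiv : ∀ j, ∃ e, d i₁ = e ++ α :: (s ++ b j) ∧ d i₂ = e ++ β :: (t ++ b j) := by
    intro j
    have hα := h i₁ j
    have hβ := h i₂ j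
    rw [h₁, List.append_assoc, List.cons_append] at hα
    rw [h₂, List.append_assoc, List.cons_append] at hβ
    obtain ⟨e, rfl⟩ := prefix_of_prefix_diverging hαβ ⟨_, hα.symm⟩ ⟨_, hβ.symm⟩
    rw [List.append_assoc, List.append_cancel_left_eq] at hα hβ
    exact ⟨e, hα.symm, hβ.symm⟩
  obtain ⟨e₁, hα₁, hβ₁⟩ := hdiv j₁
  obtain ⟨e₂, hα₂, hβ₂⟩ := hdiv j₂
  have he : e₁ = e₂ := by
    refine List.IsPrefix.eq_of_length_le
      (prefix_of_prefix_diverging hαβ ⟨_, hα₁.symm.trans hα₂⟩ ⟨_, hβ₁.symm.trans hβ₂⟩)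
      (prefix_of_prefix_diverging hαβ ⟨_, hα₂.symm.trans hα₁⟩
        ⟨_, hβ₂.symm.trans hβ₁⟩).length_le
  rw [hα₁, he, List.append_cancel_left_eq, List.cons_eq_cons, List.append_cancel_left_eq] at hα₂
  exact hb hα₂.2

/-- Inserting `z` at the end of `X` and `z'` at the end of `Y` has the same effect on a word having
both as prefixes, hence so does iterating these insertions, even infinitely often. -/
theorem append_stream_eq_of_append_append_eq {X Y R V z z' : List Δ} {ζ ζ' : Stream' Δ}
    (hz : z ≠ []) (hz' : z' ≠ []) (hζ : z ∈ periods ζ) (hζ' : z' ∈ periods ζ')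
    (h : X ++ R = Y ++ V) (hins : X ++ (z ++ R) = Y ++ (z' ++ V)) : X ++ₛ ζ = Y ++ₛ ζ' := by
  obtain ⟨e, rfl, rfl⟩ | ⟨e, rfl, rfl⟩ := List.append_eq_append_iff.1 h
  · rw [List.append_assoc, List.append_cancel_left_eq, ← List.append_assoc, ← List.append_assoc,
      List.append_cancel_right_eq] at hins
    have he : z ∈ periods (e ++ₛ ζ') := by
      rw [mem_periods, ← Stream'.append_append_stream, hins, Stream'.append_append_stream,
        mem_periods.1 hζ']
    rw [Stream'.append_append_stream, eq_of_common_mem_periods hz hζ he]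
  · rw [List.append_assoc, List.append_cancel_left_eq, ← List.append_assoc, ← List.append_assoc,
      List.append_cancel_right_eq] at hins
    have he : z' ∈ periods (e ++ₛ ζ) := by
      rw [mem_periods, ← Stream'.append_append_stream, ← hins, Stream'.append_append_stream,
        mem_periods.1 hζ]
    rw [eq_of_common_mem_periods hz' hζ' he, Stream'.append_append_stream]

/-- The factors `x i`, `y j` of words `A (x i) B (y j) C` cross the factors `y' j`, `x' i` of
words `A' (y' j) B' (x' i) C'`: the words agree for all `i` and `j`, but the two parameters occur in
opposite orders. -/
def Crosses (x x' : ι → List Δ) (y y' : κ → List Δ) (B B' : List Δ) : Prop :=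
  ∃ A C A' C', ∀ i j,
    A ++ (x i ++ (B ++ (y j ++ C))) = A' ++ (y' j ++ (B' ++ (x' i ++ C')))

namespace Crosses

variable {x x' : ι → List Δ} {y y' : κ → List Δ} {B B' : List Δ}

theorem symm (h : Crosses x x' y y' B B') : Crosses y' y x' x B' B :=
  let ⟨A, C, A', C', h⟩ := h
  ⟨A', C', A, C, fun j i => (h i j).symm⟩

theorem reverse (h : Crosses x x' y y' B B') :
    Crosses (List.reverse ∘ y) (List.reverse ∘ y') (List.reverse ∘ x) (List.reverse ∘ x')
      B.reverse B'.reverse := by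
  obtain ⟨A, C, A', C', h⟩ := h
  refine ⟨C.reverse, A.reverse, C'.reverse, A'.reverse, fun j i => ?_⟩
  simpa only [List.reverse_append, List.append_assoc, Function.comp_apply]
    using congrArg List.reverse (h i j)

theorem ne_of_ne (h : Crosses x x' y y' B B') (j : κ) (hx : x i₁ ≠ x i₂) : x' i₁ ≠ x' i₂ := by
  obtain ⟨A, C, A', C', h⟩ := h
  intro hx'
  have hout := h i₁ j
  rw [hx', ← h i₂ j, List.append_cancel_left_eq, List.append_cancel_right_eq] at hout
  exact hx hout

theorem prefix_or_prefix (h : Crosses x x' y y' B B') (hy : y j₁ ≠ y j₂) (i₁ i₂ : ι) :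
    x i₁ <+: x i₂ ∨ x i₂ <+: x i₁ := by
  obtain ⟨A, C, A', C', h⟩ := h
  have hb : B ++ (y j₁ ++ C) ≠ B ++ (y j₂ ++ C) := by
    rwa [Ne, List.append_cancel_left_eq, List.append_cancel_right_eq]
  simpa only [List.prefix_append_right_inj] using
    prefix_or_prefix_of_append_eq_append (x := fun i => A ++ x i) (d := fun i => x' i ++ C')
      (b := fun j => B ++ (y j ++ C)) (c := fun j => A' ++ (y' j ++ B'))
      (fun i j => by simpa only [List.append_assoc] using h i j) hb i₁ i₂

theorem suffix_of_length_le (h : Crosses x x' y y' B B') (hx : x i₁ ≠ x i₂)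
    (hy : (y j₁).length ≤ (y j₂).length) : y j₁ <:+ y j₂ := by
  have hpre := h.reverse.prefix_or_prefix (List.reverse_injective.ne hx) j₁ j₂
  simp only [Function.comp_apply, List.reverse_prefix] at hpre
  exact hpre.elim id fun hsuf => (hsuf.eq_of_length_le hy) ▸ List.suffix_rfl

theorem exists_append_stream_eq (h : Crosses x x' y y' B B') (hx : x i₁ ≠ x i₂) {z : List Δ}
    (hz : z ≠ []) (hy : y j₂ = z ++ y j₁) {ζ : Stream' Δ} (hζ : z ∈ periods ζ) :
    ∃ θ, ∀ i, x i ++ₛ (B ++ₛ ζ) = θ := by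
  have hpre := h.symm.prefix_or_prefix (h.ne_of_ne j₁ hx) j₁ j₂
  obtain ⟨A, C, A', C', h⟩ := h
  have hlen : (y' j₂).length = z.length + (y' j₁).length := by
    have h₁ := congrArg List.length (h i₁ j₁)
    have h₂ := congrArg List.length (h i₁ j₂)
    simp only [hy, List.length_append] at h₁ h₂
    omega
  have hzpos := List.length_pos_iff.2 hz
  obtain ⟨z', hz'⟩ : y' j₁ <+: y' j₂ := hpre.resolve_right fun hle => by
    have := hle.length_le
    omega
  have hz'_ne : z' ≠ [] := by
    rintro rfl
    rw [← hz', List.append_nil] at hlen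
    omega
  have hA : ∀ i, A ++ (x i ++ B) ++ₛ ζ = A' ++ y' j₁ ++ₛ Stream'.cycle z' hz'_ne := fun i => by
    refine append_stream_eq_of_append_append_eq (R := y j₁ ++ C) (V := B' ++ (x' i ++ C')) hz
      hz'_ne hζ (mem_periods_cycle hz'_ne) ?_ ?_
    · simpa only [List.append_assoc] using h i j₁
    · simpa only [hy, ← hz', List.append_assoc] using h i j₂
  refine ⟨x i₁ ++ₛ (B ++ₛ ζ), fun i => ?_⟩
  simpa only [Stream'.append_append_stream, Stream'.append_right_inj] using
    (hA i).trans (hA i₁).symm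

theorem append_stream_eq_cycle {X Y : Set (List Δ)} {x' : X → List Δ} {y' : Y → List Δ}
    (h : Crosses (↑) x' (↑) y' B B') (hX : X.Nontrivial) (hlcp : QuasiPeriodic X → LcpEps X)
    {s y z : List Δ} (hs : s ∈ X) (hs_ne : s ≠ []) (hy : y ∈ Y) (hzy : z ++ y ∈ Y) (hz : z ≠ []) :
    ∀ x ∈ X, x ++ₛ (B ++ₛ Stream'.cycle z hz) = Stream'.cycle s hs_ne := by
  obtain ⟨s₁, hs₁, s₂, hs₂, hne⟩ := hX
  obtain ⟨θ, hθ⟩ := h.exists_append_stream_eq (i₁ := ⟨s₁, hs₁⟩) (i₂ := ⟨s₂, hs₂⟩) (j₁ := ⟨y, hy⟩)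
    (j₂ := ⟨z ++ y, hzy⟩) hne hz rfl (mem_periods_cycle hz)
  rw [Subtype.forall] at hθ
  obtain rfl := eq_of_append_stream_eq ⟨s, hs⟩ hlcp hθ
  intro x hx
  rw [hθ x hx]
  exact eq_of_common_mem_periods hs_ne (hθ s hs) (mem_periods_cycle hs_ne)

end Crosses

end Crossing

section Factors

variable {Δ : Type} {n : ℕ} {u : Fin (n + 1) → List Δ} {ws : Fin n → List Δ}

/-- The factor of `interleave n u ws` contributed by the positions in `l`, each of them together
with the constant word following it. -/
def factor (u : Fin (n + 1) → List Δ) (ws : Fin n → List Δ) (l : List (Fin n)) : List Δ :=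
  l.flatMap fun i => ws i ++ u i.succ

theorem factor_cons (i : Fin n) (l : List (Fin n)) :
    factor u ws (i :: l) = ws i ++ (u i.succ ++ factor u ws l) := by
  rw [factor, List.flatMap_cons, List.append_assoc, factor]

theorem factor_append (l l' : List (Fin n)) :
    factor u ws (l ++ l') = factor u ws l ++ factor u ws l' :=
  List.flatMap_append

theorem factor_update_of_notMem {i : Fin n} {l : List (Fin n)} (hi : i ∉ l) (w : List Δ) :
    factor u (Function.update ws i w) l = factor u ws l := by
  refine List.flatMap_congr fun j hj => ?_
  rw [Function.update_of_ne (ne_of_mem_of_not_mem hj hi)]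

theorem interleave_eq_append_factor (u : Fin (n + 1) → List Δ) (ws : Fin n → List Δ) :
    interleave n u ws = u 0 ++ factor u ws (List.finRange n) := by
  rw [interleave, factor]
  induction List.finRange n with
  | nil => rfl
  | cons i l ih =>
    rw [List.foldr_cons, List.flatMap_cons, List.append_cancel_left ih]

theorem exists_interleave_update_eq (u : Fin (n + 1) → List Δ) (ws : Fin n → List Δ)
    (k : Fin n) : ∃ A C, ∀ w, interleave n u (Function.update ws k w) = A ++ w ++ C := by
  obtain ⟨l₁, l₂, hl⟩ := List.append_of_mem (List.mem_finRange k)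
  have hk : k ∉ l₁ ++ l₂ :=
    (List.nodup_cons.1 (List.nodup_middle.1 (hl ▸ List.nodup_finRange n))).1
  rw [List.mem_append, not_or] at hk
  refine ⟨u 0 ++ factor u ws l₁, u k.succ ++ factor u ws l₂, fun w => ?_⟩
  rw [interleave_eq_append_factor, hl, factor_append, factor_cons, factor_update_of_notMem hk.1,
    factor_update_of_notMem hk.2, Function.update_self]
  simp only [List.append_assoc]

theorem exists_finRange_eq_of_lt {k m : Fin n} (hkm : k < m) :
    ∃ l₁ l₂ l₃, List.finRange n = l₁ ++ k :: (l₂ ++ m :: l₃) ∧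
      ∀ i, k ≤ i → i < m → i ∈ k :: l₂ := by
  obtain ⟨l₁, l, hl⟩ := List.append_of_mem (List.mem_finRange k)
  have hsorted := List.pairwise_append.1 (hl ▸ List.pairwise_lt_finRange n)
  have hmem : ∀ i, k ≤ i → i ∈ k :: l := fun i hki =>
    (List.mem_append.1 (hl ▸ List.mem_finRange i)).resolve_left fun hi =>
      (hsorted.2.2 i hi k List.mem_cons_self).not_ge hki
  obtain ⟨l₂, l₃, rfl⟩ :=
    List.append_of_mem ((List.mem_cons.1 (hmem m hkm.le)).resolve_left hkm.ne')
  have hsorted' := (List.pairwise_append.1 (List.pairwise_cons.1 hsorted.2.1).2).2.1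
  refine ⟨l₁, l₂, l₃, hl, fun i hki him => ?_⟩
  rw [← List.cons_append] at hmem
  refine (List.mem_append.1 (hmem i hki)).resolve_right fun hi => ?_
  obtain rfl | hi := List.mem_cons.1 hi
  · exact him.false
  · exact him.asymm (List.rel_of_pairwise_cons hsorted' hi)

theorem exists_interleave_update_update_eq {k m : Fin n} (hkm : k < m) :
    ∃ l, (k :: l).Nodup ∧ (∀ i, k ≤ i → i < m → i ∈ k :: l) ∧
      ∀ (u : Fin (n + 1) → List Δ) (ws : Fin n → List Δ), ∃ A C, ∀ x y,
        interleave n u (Function.update (Function.update ws k x) m y) =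
          A ++ (x ++ (u k.succ ++ factor u ws l ++ (y ++ C))) := by
  obtain ⟨l₁, l₂, l₃, hl, hmem⟩ := exists_finRange_eq_of_lt hkm
  have hnodup := hl ▸ List.nodup_finRange n
  simp only [List.nodup_append', List.nodup_cons, List.mem_append, List.mem_cons, not_or,
    List.disjoint_append_right, List.disjoint_cons_right] at hnodup
  obtain ⟨-, ⟨⟨hk₂, -, hk₃⟩, hl₂, ⟨hm₃, -⟩, hm₂, -⟩, hk₁, -, hm₁, -⟩ := hnodup
  refine ⟨l₂, List.nodup_cons.2 ⟨hk₂, hl₂⟩, hmem, fun u ws =>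
    ⟨u 0 ++ factor u ws l₁, u m.succ ++ factor u ws l₃, fun x y => ?_⟩⟩
  simp only [interleave_eq_append_factor, hl, factor_append, factor_cons,
    factor_update_of_notMem hk₁, factor_update_of_notMem hk₂, factor_update_of_notMem hk₃,
    factor_update_of_notMem hm₁, factor_update_of_notMem hm₂, factor_update_of_notMem hm₃,
    Function.update_self, Function.update_of_ne hkm.ne, List.append_assoc]

variable {L : Fin n → Set (List Δ)} {ξ η : Stream' Δ}

theorem subset_periods_of_factor_append_stream_eq (hL : ∀ i, (L i).Nonempty)
    (hlcp : ∀ i, QuasiPeriodic (L i) → LcpEps (L i))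
    (hword : ∀ i, QuasiPeriodic (appendLang (L i) (u i.succ)) →
      LcpEps (appendLang (L i) (u i.succ)))
    {l : List (Fin n)} (hl : l.Nodup)
    (h : ∀ ws, (∀ i, ws i ∈ L i) → factor u ws l ++ₛ η = ξ) :
    η = ξ ∧ ∀ i ∈ l, L i ⊆ periods ξ ∧ u i.succ = [] := by
  choose ws₀ hws₀ using hL
  induction l with
  | nil => exact ⟨h ws₀ hws₀, fun i hi => absurd hi List.not_mem_nil⟩
  | cons k l ih =>
    obtain ⟨hk, hl⟩ := List.nodup_cons.1 hl
    have hstep : ∀ ws, (∀ i, ws i ∈ L i) → ∀ x ∈ L k,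
        x ++ₛ (u k.succ ++ₛ (factor u ws l ++ₛ η)) = ξ := fun ws hws x hx => by
      have hupd := h (Function.update ws k x) fun i => by
        obtain rfl | hi := eq_or_ne i k
        · rwa [Function.update_self]
        · rw [Function.update_of_ne hi]; exact hws i
      rwa [factor_cons, Function.update_self, factor_update_of_notMem hk,
        Stream'.append_append_stream, Stream'.append_append_stream] at hupd
    have hrest : ∀ ws, (∀ i, ws i ∈ L i) → u k.succ ++ₛ (factor u ws l ++ₛ η) = ξ :=
      fun ws hws => eq_of_append_stream_eq ⟨_, hws₀ k⟩ (hlcp k) (hstep ws hws)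
    have hLk : L k ⊆ periods ξ := fun x hx =>
      hrest ws₀ hws₀ ▸ subset_periods_of_append_stream_eq ⟨_, hws₀ k⟩ (hlcp k) (hstep ws₀ hws₀) hx
    have hu : u k.succ = [] := eq_nil_of_subset_periods hLk (hrest ws₀ hws₀) (hword k)
    simp only [hu, Stream'.nil_append_stream] at hrest
    obtain ⟨hη, hind⟩ := ih hl hrest
    exact ⟨hη, List.forall_mem_cons.2 ⟨⟨hLk, hu⟩, hind⟩⟩

theorem exists_subset_periods_of_crosses (hL : ∀ i, (L i).Nonempty)
    (hearliest : ∀ i, QuasiPeriodic (L i) → EarliestLang (L i))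
    (hword : ∀ i, QuasiPeriodic (appendLang (L i) (u i.succ)) →
      LcpEps (appendLang (L i) (u i.succ)))
    {k m : Fin n} {l : List (Fin n)} (hl : (k :: l).Nodup)
    (hk : (L k).Nontrivial) (hm : (L m).Nontrivial)
    (hcross : ∀ ws, (∀ i, ws i ∈ L i) → ∃ x' y' B',
      Crosses ((↑) : L k → List Δ) x' ((↑) : L m → List Δ) y' (u k.succ ++ factor u ws l) B') :
    ∃ ξ, (∀ i ∈ k :: l, L i ⊆ periods ξ ∧ u i.succ = []) ∧ L m ⊆ periods ξ := by
  have hlcp i hqp := (hearliest i hqp).1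
  obtain ⟨s, hs, hs_ne⟩ := hk.exists_ne []
  have hsuffix : ∀ y₁ ∈ L m, ∀ y₂ ∈ L m, y₁.length ≤ y₂.length → y₁ <:+ y₂ := by
    intro y₁ hy₁ y₂ hy₂ hlen
    choose ws hws using hL
    obtain ⟨x', y', B', hcr⟩ := hcross ws hws
    obtain ⟨s₁, hs₁, s₂, hs₂, hne⟩ := hk
    exact hcr.suffix_of_length_le (i₁ := ⟨s₁, hs₁⟩) (i₂ := ⟨s₂, hs₂⟩) (j₁ := ⟨y₁, hy₁⟩)
      (j₂ := ⟨y₂, hy₂⟩) hne hlen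
  have hinsert : ∀ z y, y ∈ L m → z ++ y ∈ L m → ∀ hz : z ≠ [],
      Stream'.cycle z hz = Stream'.cycle s hs_ne ∧
        ∀ i ∈ k :: l, L i ⊆ periods (Stream'.cycle s hs_ne) ∧ u i.succ = [] := by
    intro z y hy hzy hz
    refine subset_periods_of_factor_append_stream_eq hL hlcp hword hl fun ws hws => ?_
    obtain ⟨x', y', B', hcr⟩ := hcross ws hws
    rw [factor_cons, Stream'.append_append_stream]
    exact hcr.append_stream_eq_cycle hk (hlcp k) hs hs_ne hy hzy hz _ (hws k)
  refine ⟨Stream'.cycle s hs_ne, ?_, ?_⟩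
  · obtain ⟨y, hy, hmin⟩ := exists_shortest hm.nonempty
    obtain ⟨y₂, hy₂, hne⟩ := hm.exists_ne y
    obtain ⟨z, rfl⟩ := hsuffix y hy y₂ hy₂ (hmin y₂ hy₂)
    exact (hinsert z y hy hy₂ fun hz => hne (by rw [hz, List.nil_append])).2
  · refine subset_periods_of_suffix (hL m) (fun hqp => (hearliest m hqp).2) fun x hx y hy hlen => ?_
    obtain ⟨z, rfl⟩ := hsuffix x hx y hy hlen
    obtain rfl | hz := eq_or_ne z []
    · exact ⟨[], nil_mem_periods, rfl⟩
    · exact ⟨z, (hinsert z x hx hy hz).1 ▸ mem_periods_cycle hz, rfl⟩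

end Factors

theorem exists_le_lt_perm_eq_of_lt {α : Type*} [LinearOrder α] {k l : α} [Finite (Set.Iio l)]
    {σ σ' : Equiv.Perm α} (hkl : k < l) (h : σ k = σ' l) :
    ∃ m m', l ≤ m ∧ m' < l ∧ σ m = σ' m' := by
  by_contra! hne
  have hmaps : Set.MapsTo (σ'.trans σ.symm) (Set.Iio l) (Set.Iio l) := fun m' hm' =>
    not_le.1 fun hm => hne _ m' hm hm' (σ.apply_symm_apply _)
  have hinv : σ'.symm (σ k) < l := Equiv.Perm.perm_symm_mapsTo_of_mapsTo _ hmaps hkl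
  rw [h, Equiv.symm_apply_apply] at hinv
  exact hinv.false

section Transducers

variable {F Δ Q Q' : Type} {ar : F → ℕ} {M : LTW F ar Δ Q} {M' : LTW F ar Δ Q'} {q : Q} {q' : Q'}
  {f : F} {r : LTWRule Δ Q (ar f)} {r' : LTWRule Δ Q' (ar f)} {ts : Fin (ar f) → RTree F ar}
  {ws : Fin (ar f) → List Δ} {t : RTree F ar} {w : List Δ}

/-- On the subtrees `ts`, the calls on the right-hand side `r` output the words `ws`; the words are
indexed by the position of the call, the subtrees by their position in the input. -/
def LTW.Yields (M : LTW F ar Δ Q) (r : LTWRule Δ Q (ar f)) (ts : Fin (ar f) → RTree F ar)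
    (ws : Fin (ar f) → List Δ) : Prop :=
  ∀ i, M.semState (ts (r.perm i)) (r.st i) = some (ws i)

namespace LTW

theorem semState_node_eq_some_iff (hr : M.rules q f = some r) :
    M.semState (.node f ts) q = some w ↔
      ∃ ws, M.Yields r ts ws ∧ interleave (ar f) r.word ws = w := by
  rw [semState]
  simp only [hr]
  constructor
  · split_ifs with h
    · rintro ⟨rfl⟩
      exact ⟨_, fun i => (Option.some_get (h i)).symm, rfl⟩
    · exact nofun
  · rintro ⟨ws, hws, rfl⟩
    rw [dif_pos fun i => Option.isSome_of_eq_some (hws i)]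
    simp only [hws _, Option.get_some]

theorem Yields.update (h : M.Yields r ts ws) {k : Fin (ar f)}
    (ht : M.semState t (r.st k) = some w) :
    M.Yields r (Function.update ts (r.perm k) t) (Function.update ws k w) := by
  intro i
  obtain rfl | hi := eq_or_ne i k
  · rwa [Function.update_self, Function.update_self]
  · rw [Function.update_of_ne (r.perm.injective.ne hi), Function.update_of_ne hi, h i]

theorem exists_yields (M : LTW F ar Δ Q) (r : LTWRule Δ Q (ar f))
    (h : ∀ i, ws i ∈ M.lang (r.st i)) :
    ∃ ts, M.Yields r ts ws := by
  choose ts hts using h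
  exact ⟨ts ∘ r.perm.symm, fun i => by rw [Function.comp_apply, Equiv.symm_apply_apply, hts]⟩

theorem NonemptyDoms.lang_nonempty (h : M.NonemptyDoms) (q : Q) : (M.lang q).Nonempty :=
  let ⟨t, w, hw⟩ := h q
  ⟨w, t, hw⟩

theorem Yields.semState_node_update (hr : M.rules q f = some r) (h : M.Yields r ts ws)
    (k : Fin (ar f)) (t : RTree F ar) :
    M.semState (.node f (Function.update ts (r.perm k) t)) q =
      (M.semState t (r.st k)).map fun w =>
        interleave (ar f) r.word (Function.update ws k w) := by
  ext v
  rw [semState_node_eq_some_iff hr, Option.map_eq_some_iff]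
  constructor
  · rintro ⟨ws', hws', rfl⟩
    have hk := hws' k
    rw [Function.update_self] at hk
    refine ⟨ws' k, hk, congrArg _ (Function.update_eq_iff.2 ⟨rfl, fun i hi => ?_⟩)⟩
    have hi' := hws' i
    rwa [Function.update_of_ne (r.perm.injective.ne hi), h i, Option.some_inj] at hi'
  · rintro ⟨w, hw, rfl⟩
    exact ⟨_, h.update hw, rfl⟩

end LTW

/-- The functions computed by the states `q` and `q'` have the same domain and differ only by
constant words put around the outputs. -/
def EqUpToContext (M : LTW F ar Δ Q) (M' : LTW F ar Δ Q') (q : Q) (q' : Q') : Prop :=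
  ∃ a b a' b', ∀ t, (M.semState t q).map (fun w => a ++ w ++ b) =
    (M'.semState t q').map fun w => a' ++ w ++ b'

namespace EqUpToContext

theorem symm (h : EqUpToContext M M' q q') : EqUpToContext M' M q' q :=
  let ⟨a, b, a', b', h⟩ := h
  ⟨a', b', a, b, fun t => (h t).symm⟩

theorem exists_append_eq (h : EqUpToContext M M' q q') :
    ∃ a b a' b', ∀ t w, M.semState t q = some w →
      ∃ w', M'.semState t q' = some w' ∧ a ++ w ++ b = a' ++ w' ++ b' := by
  obtain ⟨a, b, a', b', h⟩ := h
  refine ⟨a, b, a', b', fun t w hw => ?_⟩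
  have ht := h t
  rw [hw, Option.map_some, eq_comm, Option.map_eq_some_iff] at ht
  exact ht.imp fun _ => And.imp_right Eq.symm

theorem exists_semState_eq_some (h : EqUpToContext M M' q q') (hw : M.semState t q = some w) :
    ∃ w', M'.semState t q' = some w' :=
  let ⟨_, _, _, _, h⟩ := h.exists_append_eq
  (h t w hw).imp fun _ => And.left

theorem exists_yields (h : EqUpToContext M M' q q') (hr : M.rules q f = some r)
    (hr' : M'.rules q' f = some r') (hws : M.Yields r ts ws) : ∃ ws', M'.Yields r' ts ws' :=
  let ⟨_, hw⟩ := h.exists_semState_eq_some ((LTW.semState_node_eq_some_iff hr).2 ⟨ws, hws, rfl⟩)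
  let ⟨ws', hws', _⟩ := (LTW.semState_node_eq_some_iff hr').1 hw
  ⟨ws', hws'⟩

theorem lang_nonempty (h : EqUpToContext M M' q q') (hq : (M.lang q).Nonempty) :
    (M'.lang q').Nonempty :=
  let ⟨_, t, hw⟩ := hq
  (h.exists_semState_eq_some hw).imp fun _ hw' => ⟨t, hw'⟩

theorem lang_nontrivial (h : EqUpToContext M M' q q') (hq : (M.lang q).Nontrivial) :
    (M'.lang q').Nontrivial := by
  obtain ⟨a, b, a', b', h⟩ := h.exists_append_eq
  obtain ⟨w₁, ⟨t₁, h₁⟩, w₂, ⟨t₂, h₂⟩, hne⟩ := hq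
  obtain ⟨w₁', h₁', hw₁⟩ := h t₁ w₁ h₁
  obtain ⟨w₂', h₂', hw₂⟩ := h t₂ w₂ h₂
  refine ⟨w₁', ⟨t₁, h₁'⟩, w₂', ⟨t₂, h₂'⟩, ?_⟩
  rintro rfl
  rw [← hw₂, List.append_cancel_right_eq, List.append_cancel_left_eq] at hw₁
  exact hne hw₁

theorem child (h : EqUpToContext M M' q q') (hdom : M.NonemptyDoms) (hr : M.rules q f = some r)
    (hr' : M'.rules q' f = some r') {i j : Fin (ar f)} (hij : r.perm i = r'.perm j) :
    EqUpToContext M M' (r.st i) (r'.st j) := by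
  choose ws hws using fun i => hdom.lang_nonempty (r.st i)
  obtain ⟨ts, hts⟩ := LTW.exists_yields M r hws
  obtain ⟨ws', hts'⟩ := h.exists_yields hr hr' hts
  obtain ⟨a, b, a', b', h⟩ := h
  obtain ⟨A, C, hA⟩ := exists_interleave_update_eq r.word ws i
  obtain ⟨A', C', hA'⟩ := exists_interleave_update_eq r'.word ws' j
  refine ⟨a ++ A, C ++ b, a' ++ A', C' ++ b', fun t => ?_⟩
  have hnode := h (.node f (Function.update ts (r.perm i) t))
  rw [hts.semState_node_update hr, hij, hts'.semState_node_update hr', Option.map_map,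
    Option.map_map] at hnode
  simpa only [Function.comp_def, hA, hA', List.append_assoc] using hnode

theorem exists_crosses (h : EqUpToContext M M' q q') (hdom : M.NonemptyDoms)
    (hr : M.rules q f = some r) (hr' : M'.rules q' f = some r') {k m l m' : Fin (ar f)}
    (hkm : k < m) (hml : m' < l) (hkl : r.perm k = r'.perm l) (hmm : r.perm m = r'.perm m') :
    ∃ p, (k :: p).Nodup ∧ (∀ i, k ≤ i → i < m → i ∈ k :: p) ∧
      ∀ ws, (∀ i, ws i ∈ M.lang (r.st i)) → ∃ x' y' B',
        Crosses ((↑) : M.lang (r.st k) → List Δ) x' ((↑) : M.lang (r.st m) → List Δ) y'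
          (r.word k.succ ++ factor r.word ws p) B' := by
  obtain ⟨p, hnodup, hp, hout⟩ := exists_interleave_update_update_eq (Δ := Δ) hkm
  obtain ⟨p', -, -, hout'⟩ := exists_interleave_update_update_eq (Δ := Δ) hml
  refine ⟨p, hnodup, hp, fun ws hws => ?_⟩
  obtain ⟨ts, hts⟩ := LTW.exists_yields M r hws
  obtain ⟨ws', hts'⟩ := h.exists_yields hr hr' hts
  choose s hs using fun x : M.lang (r.st k) => x.2
  choose t ht using fun y : M.lang (r.st m) => y.2
  choose x' hx' using fun x => (h.child hdom hr hr' hkl).exists_semState_eq_some (hs x)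
  choose y' hy' using fun y => (h.child hdom hr hr' hmm).exists_semState_eq_some (ht y)
  obtain ⟨a, b, a', b', h⟩ := h
  obtain ⟨A, C, hA⟩ := hout r.word ws
  obtain ⟨A', C', hA'⟩ := hout' r'.word ws'
  refine ⟨x', y', r'.word m'.succ ++ factor r'.word ws' p',
    a ++ A, C ++ b, a' ++ A', C' ++ b', fun x y => ?_⟩
  have hnode := h (.node f (Function.update (Function.update ts (r.perm k) (s x)) (r.perm m) (t y)))
  rw [(hts.update (hs x)).semState_node_update hr, ht, hkl, hmm,
    (hts'.update (hx' x)).semState_node_update hr', hy'] at hnode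
  simpa only [Option.map_some, Option.some_inj, Function.update_comm hml.ne', hA, hA',
    List.append_assoc] using hnode

end EqUpToContext

theorem CoReach.eqUpToContext (hdom : M.NonemptyDoms) (heq : M.sem = M'.sem)
    (h : CoReach M M' q q') : EqUpToContext M M' q q' := by
  induction h with
  | base => exact ⟨_, _, _, _, congrFun heq⟩
  | step _ hr hr' hij ih => exact ih.child hdom hr hr' hij

theorem LTW.lang_nontrivial_of_not_erasing (hne : (M.lang q).Nonempty)
    (hlcp : QuasiPeriodic (M.lang q) → LcpEps (M.lang q)) (h : ¬M.Erasing q) :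
    (M.lang q).Nontrivial := by
  contrapose! h
  exact eq_singleton_nil_of_subsingleton hne h hlcp

theorem LTW.EraseOrdered.lang_nontrivial_of_le (heo : M.EraseOrdered) (hr : M.rules q f = some r)
    {i j : Fin (ar f)} (hij : i ≤ j) (hne : (M.lang (r.st i)).Nonempty)
    (hlcp : QuasiPeriodic (M.lang (r.st i)) → LcpEps (M.lang (r.st i)))
    (hj : (M.lang (r.st j)).Nontrivial) : (M.lang (r.st i)).Nontrivial := by
  refine lang_nontrivial_of_not_erasing hne hlcp fun hi => ?_
  rw [(heo q f r hr i j hi hij).1] at hj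
  exact Set.not_nontrivial_singleton hj

theorem EqUpToContext.exists_subset_periods (h : EqUpToContext M M' q q') (hdom : M.NonemptyDoms)
    (hearliest : ∀ i, QuasiPeriodic (M.lang (r.st i)) → EarliestLang (M.lang (r.st i)))
    (hword : ∀ i, QuasiPeriodic (appendLang (M.lang (r.st i)) (r.word i.succ)) →
      LcpEps (appendLang (M.lang (r.st i)) (r.word i.succ)))
    (hr : M.rules q f = some r) (hr' : M'.rules q' f = some r') {k m l m' : Fin (ar f)}
    (hkm : k < m) (hml : m' < l) (hkl : r.perm k = r'.perm l) (hmm : r.perm m = r'.perm m')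
    (hk : (M.lang (r.st k)).Nontrivial) (hm : (M.lang (r.st m)).Nontrivial) :
    ∃ ξ, (∀ i, k ≤ i → i ≤ m → M.lang (r.st i) ⊆ periods ξ) ∧
      ∀ i, k ≤ i → i < m → r.word i.succ = [] := by
  obtain ⟨p, hnodup, hp, hcross⟩ := h.exists_crosses hdom hr hr' hkm hml hkl hmm
  obtain ⟨ξ, hξ, hξm⟩ := exists_subset_periods_of_crosses (fun i => hdom.lang_nonempty (r.st i))
    hearliest hword hnodup hk hm hcross
  refine ⟨ξ, fun i hki him => ?_, fun i hki him => (hξ i (hp i hki him)).2⟩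
  obtain rfl | him := him.eq_or_lt
  · exact hξm
  · exact (hξ i (hp i hki him)).1

end Transducers

theorem coreachable_rules_of_equivalent_partial_earliest_eraseOrdered_general
    {F Δ Q Q' : Type} {ar : F → ℕ} (M : LTW F ar Δ Q) (M' : LTW F ar Δ Q')
    (hdom : M.NonemptyDoms) (heq : M.sem = M'.sem)
    (heo : M.EraseOrdered) (heo' : M'.EraseOrdered)
    (ha : ∀ q : Q, QuasiPeriodic (M.lang q) → EarliestLang (M.lang q))
    (ha' : ∀ q' : Q', QuasiPeriodic (M'.lang q') → LcpEps (M'.lang q'))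
    (hb : ∀ (q : Q) (f : F) (r : LTWRule Δ Q (ar f)), M.rules q f = some r →
      ∀ i : Fin (ar f), QuasiPeriodic (appendLang (M.lang (r.st i)) (r.word i.succ)) →
        LcpEps (appendLang (M.lang (r.st i)) (r.word i.succ)))
    {q : Q} {q' : Q'} (hco : CoReach M M' q q')
    {f : F} {r : LTWRule Δ Q (ar f)} {r' : LTWRule Δ Q' (ar f)}
    (hr : M.rules q f = some r) (hr' : M'.rules q' f = some r') :
    ∀ k l : Fin (ar f), k < l → r.perm k = r'.perm l →
      (∃ w : List Δ, ∀ i : Fin (ar f), k ≤ i → i ≤ l → PeriodicOf (M.lang (r.st i)) w) ∧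
      (∀ j : Fin (ar f), k ≤ j → j < l → r.word j.succ = []) := by
  intro k l hkl hperm
  by_cases hk : M.Erasing (r.st k)
  · have herase i (hi : k ≤ i) := heo q f r hr k i hk hi
    exact ⟨⟨[], fun i hi _ => (herase i hi).1 ▸ periodicOf_singleton_nil⟩,
      fun j hj _ => (herase j hj).2.2⟩
  have hequiv := hco.eqUpToContext hdom heq
  obtain ⟨m, m', hlm, hml, hm⟩ := exists_le_lt_perm_eq_of_lt hkl hperm
  have hequiv_kl := hequiv.child hdom hr hr' hperm
  have hequiv_mm' := hequiv.child hdom hr hr' hm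
  have hne i := hdom.lang_nonempty (r.st i)
  have hLk := LTW.lang_nontrivial_of_not_erasing (hne k) (fun hqp => (ha _ hqp).1) hk
  have hLm : (M.lang (r.st m)).Nontrivial := hequiv_mm'.symm.lang_nontrivial <|
    heo'.lang_nontrivial_of_le hr' hml.le (hequiv_mm'.lang_nonempty (hne m))
      (ha' _) (hequiv_kl.lang_nontrivial hLk)
  obtain ⟨ξ, hperiods, hwords⟩ := hequiv.exists_subset_periods hdom (fun i => ha _) (hb q f r hr)
    hr hr' (hkl.trans_le hlm) hml hperm hm hLk hLm
  obtain ⟨c, hc⟩ := exists_mem_periods_iff_listPow ξ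
  refine ⟨⟨c, fun i hki hil => ?_⟩, fun j hkj hjl => hwords j hkj (hjl.trans_le hlm)⟩
  have hLi : (M.lang (r.st i)).Nontrivial :=
    heo.lang_nontrivial_of_le hr (hil.trans hlm) (hne i) (fun hqp => (ha _ hqp).1) hLm
  obtain ⟨v, hv, hv_ne⟩ := hLi.exists_ne []
  exact periodicOf_of_subset_periods hc (hperiods i hki (hil.trans hlm)) hv hv_ne

/-- the first part of Statement 3 already holds when only quasi-periodic
states and quasi-periodic rule parts `q(x) u` are required to be earliest. -/
theorem coreachable_rules_of_equivalent_partial_earliest_eraseOrdered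
    {F Δ Q Q' : Type} {ar : F → ℕ} [Finite Q] [Finite Q']
    (M : LTW F ar Δ Q) (M' : LTW F ar Δ Q')
    (hdom : M.NonemptyDoms) (hdom' : M'.NonemptyDoms)
    (heq : M.sem = M'.sem)
    (heo : M.EraseOrdered) (heo' : M'.EraseOrdered)
    (ha : ∀ q : Q, QuasiPeriodic (M.lang q) → EarliestLang (M.lang q))
    (ha' : ∀ q' : Q', QuasiPeriodic (M'.lang q') → EarliestLang (M'.lang q'))
    (hb : ∀ (q : Q) (f : F) (r : LTWRule Δ Q (ar f)), M.rules q f = some r →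
      ∀ i : Fin (ar f), QuasiPeriodic (appendLang (M.lang (r.st i)) (r.word i.succ)) →
        LcpEps (appendLang (M.lang (r.st i)) (r.word i.succ)))
    (hb' : ∀ (q' : Q') (f : F) (r' : LTWRule Δ Q' (ar f)), M'.rules q' f = some r' →
      ∀ i : Fin (ar f), QuasiPeriodic (appendLang (M'.lang (r'.st i)) (r'.word i.succ)) →
        LcpEps (appendLang (M'.lang (r'.st i)) (r'.word i.succ)))
    {q : Q} {q' : Q'} (hco : CoReach M M' q q')
    {f : F} {r : LTWRule Δ Q (ar f)} {r' : LTWRule Δ Q' (ar f)}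
    (hr : M.rules q f = some r) (hr' : M'.rules q' f = some r') :
    ∀ k l : Fin (ar f), k < l → r.perm k = r'.perm l →
      (∃ w : List Δ, ∀ i : Fin (ar f), k ≤ i → i ≤ l → PeriodicOf (M.lang (r.st i)) w) ∧
      (∀ j : Fin (ar f), k ≤ j → j < l → r.word j.succ = []) := by
  exact coreachable_rules_of_equivalent_partial_earliest_eraseOrdered_general M M' hdom heq heo heo'
    ha (fun q' hqp => (ha' q' hqp).1) hb hco hr hr'

end LTWpaper
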